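/- arXiv:2412.11950 — 6 statements merged into one kernel-verified Lean document; each statement's English description precedes it below -/
import Mathlib

section
/- Let J be a finite index set, let c > 0, let ρ : J → ℝ satisfy ρ_j ≥ 0 for all j and ρ̄ := Σ_{j∈J} ρ_j ≤ 1, and let η : J → ℝ satisfy 0 < η_j ≤ c for all j. Suppose e : J → ℝ and e_m ∈ ℝ satisfy |e_j| ≤ η_j for all j ∈ J and |e_m| ≤ c. Define ω := (Σ_{j∈J} ρ_j η_j^{-2} + (1 − ρ̄) c^{-2})^{-1/2}. Then the aggregated error satisfies |Σ_{j∈J} ω² ρ_j η_j^{-2} e_j + ω² (1 − ρ̄) c^{-2} e_m| ≤ ω. -/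
open Finset

theorem agg_term_bound (w a h x : ℝ) (hw : 0 ≤ w) (ha : 0 ≤ a) (hh : 0 < h) (hx : |x| ≤ h) :
    |w ^ 2 * a * (h ^ 2)⁻¹ * x| ≤ w / 2 * (w ^ 2 * (a * (h ^ 2)⁻¹) + a) := by
  have h0 : 0 ≤ w ^ 2 * a * (h ^ 2)⁻¹ := by positivity
  rw [abs_mul, abs_of_nonneg h0]
  have h1 : w ^ 2 * a * (h ^ 2)⁻¹ * |x| ≤ w ^ 2 * a * (h ^ 2)⁻¹ * h :=
    mul_le_mul_of_nonneg_left hx h0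
  have h2 : w ^ 2 * a * (h ^ 2)⁻¹ * h = w * a * (w * h⁻¹) := by
    field_simp
  have h3 : w / 2 * (w ^ 2 * (a * (h ^ 2)⁻¹) + a) - w * a * (w * h⁻¹)
      = w * a / 2 * (w * h⁻¹ - 1) ^ 2 := by
    rw [← inv_pow]; ring
  have h4 : 0 ≤ w * a / 2 * (w * h⁻¹ - 1) ^ 2 := by positivity
  linarith

/-- Deterministic core of Theorem 7: aggregated prediction error bound. -/
theorem aggregated_error_bound {ι : Type*} (J : Finset ι) (c : ℝ) (hc : 0 < c)
    (ρ η e : ι → ℝ) (e_m : ℝ)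
    (hρ : ∀ j ∈ J, 0 ≤ ρ j) (hρsum : ∑ j ∈ J, ρ j ≤ 1)
    (hηpos : ∀ j ∈ J, 0 < η j) (hηc : ∀ j ∈ J, η j ≤ c)
    (he : ∀ j ∈ J, |e j| ≤ η j) (hem : |e_m| ≤ c)
    (ω : ℝ)
    (hω : ω = (∑ j ∈ J, ρ j * ((η j) ^ 2)⁻¹ + (1 - ∑ j ∈ J, ρ j) * (c ^ 2)⁻¹) ^ (-(1:ℝ)/2)) :
    |(∑ j ∈ J, ω ^ 2 * ρ j * ((η j) ^ 2)⁻¹ * e j)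
        + ω ^ 2 * (1 - ∑ j ∈ J, ρ j) * (c ^ 2)⁻¹ * e_m| ≤ ω := by
  have hS : 0 < ∑ j ∈ J, ρ j * ((η j) ^ 2)⁻¹ + (1 - ∑ j ∈ J, ρ j) * (c ^ 2)⁻¹ := by
    have h1 : ∑ j ∈ J, ρ j * (c ^ 2)⁻¹ ≤ ∑ j ∈ J, ρ j * ((η j) ^ 2)⁻¹ := by
      refine Finset.sum_le_sum fun j hj => mul_le_mul_of_nonneg_left ?_ (hρ j hj)
      have := hηpos j hj
      have := hηc j hj
      gcongr
    rw [← Finset.sum_mul] at h1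
    have h2 : 0 < (c ^ 2)⁻¹ := by positivity
    linarith
  set S := ∑ j ∈ J, ρ j * ((η j) ^ 2)⁻¹ + (1 - ∑ j ∈ J, ρ j) * (c ^ 2)⁻¹ with hSdef
  have hw : 0 < ω := by rw [hω]; exact Real.rpow_pos_of_pos hS _
  have hw2 : ω ^ 2 * S = 1 := by
    have : ω ^ 2 = S⁻¹ := by
      rw [hω, ← Real.rpow_natCast, ← Real.rpow_mul hS.le]
      norm_num
      exact Real.rpow_neg_one S
    rw [this, inv_mul_cancel₀ hS.ne']
  have hm := agg_term_bound ω (1 - ∑ j ∈ J, ρ j) c e_m hw.le (by linarith) hc hem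
  have hJ : |∑ j ∈ J, ω ^ 2 * ρ j * ((η j) ^ 2)⁻¹ * e j| ≤
      ω / 2 * (ω ^ 2 * ∑ j ∈ J, ρ j * ((η j) ^ 2)⁻¹ + ∑ j ∈ J, ρ j) := by
    refine (Finset.abs_sum_le_sum_abs _ _).trans ?_
    rw [Finset.mul_sum, ← Finset.sum_add_distrib, Finset.mul_sum]
    exact Finset.sum_le_sum fun j hj =>
      agg_term_bound ω (ρ j) (η j) (e j) hw.le (hρ j hj) (hηpos j hj) (he j hj)
  refine (abs_add_le _ _).trans ((add_le_add hJ hm).trans (le_of_eq ?_))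
  have : ω = ω / 2 * (ω ^ 2 * S + 1) := by rw [hw2]; ring
  conv_rhs => rw [this, hSdef]
  ring
end

section
/- Let E be a set, let H be a real inner product space, let φ : E → H, let w ∈ H with ‖w‖ ≤ Γ, and define f : E → ℝ by f(x) = ⟨w, φ(x)⟩ and κ : E × E → ℝ by κ(x, x') = ⟨φ(x), φ(x')⟩. Let d : E × E → ℝ be nonnegative and suppose that for all z, x, x' ∈ E, |κ(z, x) − κ(z, x')| ≤ L_κ · d(x, x') for some constant L_κ ≥ 0. Then for all x, x' ∈ E, |f(x) − f(x')|² ≤ 2 Γ² L_κ d(x, x'), i.e., |f(x) − f(x')| ≤ L_f √(d(x, x')) with L_f := √(2 Γ² L_κ). -/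
open scoped RealInnerProductSpace

/-- Deterministic part of Lemma 3: variation bound of an RKHS function
via Lipschitz continuity of the kernel. -/
theorem rkhs_variation_bound {E H : Type*} [NormedAddCommGroup H] [InnerProductSpace ℝ H]
    (φ : E → H) (w : H) (Γ : ℝ) (hw : ‖w‖ ≤ Γ)
    (f : E → ℝ) (κ : E → E → ℝ) (d : E → E → ℝ) (L_κ : ℝ) (hL : 0 ≤ L_κ)
    (hf : ∀ x, f x = ⟪w, φ x⟫) (hκ : ∀ x x', κ x x' = ⟪φ x, φ x'⟫)
    (hd : ∀ x x', 0 ≤ d x x')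
    (hlip : ∀ z x x', |κ z x - κ z x'| ≤ L_κ * d x x') :
    ∀ x x' : E, |f x - f x'| ^ 2 ≤ 2 * Γ ^ 2 * L_κ * d x x' ∧
      |f x - f x'| ≤ Real.sqrt (2 * Γ ^ 2 * L_κ) * Real.sqrt (d x x') := by
  intro x x'
  have h1 : |f x - f x'| ≤ ‖w‖ * ‖φ x - φ x'‖ := by
    rw [hf, hf, ← inner_sub_right]
    exact abs_real_inner_le_norm _ _
  have h2 : ‖φ x - φ x'‖ ^ 2 ≤ 2 * (L_κ * d x x') := by
    have e : ‖φ x - φ x'‖ ^ 2 = (κ x x - κ x x') - (κ x' x - κ x' x') := by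
      rw [← real_inner_self_eq_norm_sq]
      simp only [hκ, inner_sub_left, inner_sub_right]
      ring
    have a := (abs_le.mp (hlip x x x')).2
    have b := (abs_le.mp (hlip x' x x')).1
    linarith
  have h3 : |f x - f x'| ^ 2 ≤ 2 * Γ ^ 2 * L_κ * d x x' := by
    calc |f x - f x'| ^ 2 ≤ (‖w‖ * ‖φ x - φ x'‖) ^ 2 := by gcongr
      _ = ‖w‖ ^ 2 * ‖φ x - φ x'‖ ^ 2 := by ring
      _ ≤ Γ ^ 2 * (2 * (L_κ * d x x')) := by gcongr
      _ = _ := by ring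
  refine ⟨h3, ?_⟩
  rw [← Real.sqrt_mul (by positivity)]
  exact Real.le_sqrt_of_sq_le h3
end

section
/- Let n ≥ 1, σ > 0 and l > 0, and define the squared exponential kernel κ : ℝⁿ × ℝⁿ → ℝ by κ(x, x') = σ² exp(−‖x − x'‖² / (2 l²)), where ‖·‖ is the Euclidean norm. Then for all x, x₁, x₂ ∈ ℝⁿ, |κ(x, x₁) − κ(x, x₂)| ≤ (σ² / l) · exp(−1/2) · ‖x₁ − x₂‖. -/
lemma se_aux (s : ℝ) : |s| * Real.exp (-s ^ 2 / 2) ≤ Real.exp (-1 / 2) := by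
  have h1 : |s| ≤ Real.exp ((s ^ 2 - 1) / 2) := by
    have := Real.add_one_le_exp ((s ^ 2 - 1) / 2)
    nlinarith [sq_nonneg (|s| - 1), sq_abs s]
  calc |s| * Real.exp (-s ^ 2 / 2)
      ≤ Real.exp ((s ^ 2 - 1) / 2) * Real.exp (-s ^ 2 / 2) := by gcongr
    _ = Real.exp (-1 / 2) := by
      rw [← Real.exp_add]; congr 1; ring

lemma se_aux_lip (σ l : ℝ) (hl : 0 < l) (a b : ℝ) :
    |σ ^ 2 * Real.exp (-a ^ 2 / (2 * l ^ 2)) - σ ^ 2 * Real.exp (-b ^ 2 / (2 * l ^ 2))|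
      ≤ σ ^ 2 / l * Real.exp (-1 / 2) * |a - b| := by
  have hd : ∀ t ∈ (Set.univ : Set ℝ), HasDerivWithinAt
      (fun t : ℝ => σ ^ 2 * Real.exp (-t ^ 2 / (2 * l ^ 2)))
      (σ ^ 2 * (Real.exp (-t ^ 2 / (2 * l ^ 2)) * (-(2 * t) / (2 * l ^ 2)))) Set.univ t := by
    intro t _
    have h := ((((hasDerivAt_pow 2 t).neg).div_const (2 * l ^ 2)).exp).const_mul (σ ^ 2)
    simpa using h
  have hb : ∀ t ∈ (Set.univ : Set ℝ),
      ‖σ ^ 2 * (Real.exp (-t ^ 2 / (2 * l ^ 2)) * (-(2 * t) / (2 * l ^ 2)))‖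
        ≤ σ ^ 2 / l * Real.exp (-1 / 2) := by
    intro t _
    have h := se_aux (t / l)
    have e1 : -(t / l) ^ 2 / 2 = -t ^ 2 / (2 * l ^ 2) := by field_simp
    have e2 : -(2 * t) / (2 * l ^ 2) = -((t / l) / l) := by field_simp
    rw [e1] at h
    rw [e2, Real.norm_eq_abs, abs_mul, abs_mul, abs_neg, abs_div (t / l) l, abs_of_pos hl,
      Real.abs_exp, abs_of_nonneg (sq_nonneg σ)]
    calc _ = σ ^ 2 / l * (|t / l| * Real.exp (-t ^ 2 / (2 * l ^ 2))) := by ring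
      _ ≤ _ := by gcongr
  have := convex_univ.norm_image_sub_le_of_norm_hasDerivWithin_le hd hb
    (Set.mem_univ b) (Set.mem_univ a)
  simpa only [Real.norm_eq_abs] using this

/-- Lemma 4: Lipschitz continuity of the squared exponential kernel. -/
theorem se_kernel_lipschitz (n : ℕ) (hn : 1 ≤ n) (σ l : ℝ) (hσ : 0 < σ) (hl : 0 < l)
    (κ : EuclideanSpace ℝ (Fin n) → EuclideanSpace ℝ (Fin n) → ℝ)
    (hκ : ∀ x x', κ x x' = σ ^ 2 * Real.exp (-‖x - x'‖ ^ 2 / (2 * l ^ 2))) :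
    ∀ x x₁ x₂ : EuclideanSpace ℝ (Fin n),
      |κ x x₁ - κ x x₂| ≤ σ ^ 2 / l * Real.exp (-1 / 2) * ‖x₁ - x₂‖ := by
  intro x x₁ x₂
  rw [hκ, hκ]
  refine (se_aux_lip σ l hl _ _).trans ?_
  have h := abs_norm_sub_norm_le (x - x₁) (x - x₂)
  rw [sub_sub_sub_cancel_left, norm_sub_rev x₂ x₁] at h
  gcongr
end

section
/- Let n ≥ 1, σ > 0, let M : ℝⁿ → ℝⁿ be a linear map, and define the kernel κ : ℝⁿ × ℝⁿ → ℝ by κ(x, x') = σ² exp(−‖M(x − x')‖² / 2), where ‖·‖ is the Euclidean norm. Then for all x, x₁, x₂ ∈ ℝⁿ, |κ(x, x₁) − κ(x, x₂)| ≤ σ² · exp(−1/2) · ‖M(x₁ − x₂)‖. -/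
theorem aux_gauss_lip (a b : ℝ) :
    |Real.exp (-a ^ 2 / 2) - Real.exp (-b ^ 2 / 2)| ≤ Real.exp (-1 / 2) * |a - b| := by
  have hd : ∀ t ∈ (Set.univ : Set ℝ), HasDerivWithinAt (fun t : ℝ => Real.exp (-t ^ 2 / 2))
      (Real.exp (-t ^ 2 / 2) * (-t)) Set.univ t := by
    intro t _
    have h1 : HasDerivAt (fun t : ℝ => -t ^ 2 / 2) (-t) t := by
      have := ((hasDerivAt_pow 2 t).neg).div_const 2
      refine this.congr_deriv ?_
      norm_num
      ring
    exact h1.exp.hasDerivWithinAt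
  have hb : ∀ t ∈ (Set.univ : Set ℝ), ‖Real.exp (-t ^ 2 / 2) * (-t)‖ ≤ Real.exp (-1 / 2) := by
    intro t _
    rw [norm_mul, norm_neg, Real.norm_eq_abs, Real.norm_eq_abs, abs_of_pos (Real.exp_pos _)]
    have h1 : |t| ≤ Real.exp ((t ^ 2 - 1) / 2) := by
      have h2 := Real.add_one_le_exp ((t ^ 2 - 1) / 2)
      nlinarith [sq_nonneg (|t| - 1), sq_abs t]
    calc Real.exp (-t ^ 2 / 2) * |t| ≤ Real.exp (-t ^ 2 / 2) * Real.exp ((t ^ 2 - 1) / 2) := by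
          gcongr
      _ = Real.exp (-1 / 2) := by
          rw [← Real.exp_add]; congr 1; ring
  have := convex_univ.norm_image_sub_le_of_norm_hasDerivWithin_le hd hb
    (Set.mem_univ b) (Set.mem_univ a)
  simpa only [Real.norm_eq_abs] using this

/-- Corollary: Lipschitz continuity of the ARD-SE kernel. -/
theorem ardse_kernel_lipschitz (n : ℕ) (hn : 1 ≤ n) (σ : ℝ) (hσ : 0 < σ)
    (M : EuclideanSpace ℝ (Fin n) →ₗ[ℝ] EuclideanSpace ℝ (Fin n))
    (κ : EuclideanSpace ℝ (Fin n) → EuclideanSpace ℝ (Fin n) → ℝ)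
    (hκ : ∀ x x', κ x x' = σ ^ 2 * Real.exp (-‖M (x - x')‖ ^ 2 / 2)) :
    ∀ x x₁ x₂ : EuclideanSpace ℝ (Fin n),
      |κ x x₁ - κ x x₂| ≤ σ ^ 2 * Real.exp (-1 / 2) * ‖M (x₁ - x₂)‖ := by
  intro x x₁ x₂
  rw [hκ, hκ, ← mul_sub, abs_mul, abs_of_nonneg (sq_nonneg σ), mul_assoc]
  refine mul_le_mul_of_nonneg_left ?_ (sq_nonneg σ)
  refine (aux_gauss_lip _ _).trans (mul_le_mul_of_nonneg_left ?_ (Real.exp_pos _).le)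
  refine (abs_norm_sub_norm_le _ _).trans (le_of_eq ?_)
  rw [← map_sub, sub_sub_sub_cancel_left, ← norm_neg, ← map_neg, neg_sub]
end

section
/- Let σ > 0, l > 0 and p > 0, and define g : ℝ → ℝ by g(r) = σ² exp(−2 sin²(π r / p) / l²). Then g is Lipschitz continuous with constant (2π σ² / (p l)) · exp(−1/2), i.e., for all r₁, r₂ ∈ ℝ, |g(r₁) − g(r₂)| ≤ (2π σ² / (p l)) exp(−1/2) · |r₁ − r₂|. -/
lemma key_bound (s l : ℝ) (hl : 0 < l) :
    |s| * Real.exp (-2 * s ^ 2 / l ^ 2) ≤ l / 2 * Real.exp (-1 / 2) := by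
  have h1 : 2 * |s| / l ≤ Real.exp (2 * s ^ 2 / l ^ 2 - 1 / 2) := by
    have h2 := Real.add_one_le_exp (2 * s ^ 2 / l ^ 2 - 1 / 2)
    have h3 : 2 * s ^ 2 / l ^ 2 = (2 * |s| / l) ^ 2 / 2 := by
      rw [← sq_abs s]; field_simp
    nlinarith [sq_nonneg (2 * |s| / l - 1)]
  have h4 : |s| = l / 2 * (2 * |s| / l) := by field_simp
  calc |s| * Real.exp (-2 * s ^ 2 / l ^ 2)
      = l / 2 * (2 * |s| / l) * Real.exp (-2 * s ^ 2 / l ^ 2) := by rw [← h4]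
    _ ≤ l / 2 * Real.exp (2 * s ^ 2 / l ^ 2 - 1 / 2) * Real.exp (-2 * s ^ 2 / l ^ 2) := by
        gcongr
    _ = l / 2 * Real.exp (-1 / 2) := by
        rw [mul_assoc, ← Real.exp_add]; congr 2; ring

/-- Corollary: Lipschitz continuity of the periodic kernel (constant valid for all l > 0). -/
theorem periodic_kernel_lipschitz (σ l p : ℝ) (hσ : 0 < σ) (hl : 0 < l) (hp : 0 < p)
    (g : ℝ → ℝ)
    (hg : ∀ r, g r = σ ^ 2 * Real.exp (-2 * Real.sin (Real.pi * r / p) ^ 2 / l ^ 2)) :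
    ∀ r₁ r₂ : ℝ,
      |g r₁ - g r₂| ≤ 2 * Real.pi * σ ^ 2 / (p * l) * Real.exp (-1 / 2) * |r₁ - r₂| := by
  intro r₁ r₂
  obtain rfl : g = _ := funext hg
  have hd : ∀ r : ℝ, HasDerivAt
      (fun r => σ ^ 2 * Real.exp (-2 * Real.sin (Real.pi * r / p) ^ 2 / l ^ 2))
      (-(4 * Real.pi * σ ^ 2 / (p * l ^ 2)) * (Real.cos (Real.pi * r / p) *
        (Real.sin (Real.pi * r / p) * Real.exp (-2 * Real.sin (Real.pi * r / p) ^ 2 / l ^ 2)))) r := by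
    intro r
    have h0 : HasDerivAt (fun r : ℝ => Real.pi * r / p) (Real.pi * 1 / p) r :=
      ((hasDerivAt_id r).const_mul Real.pi).div_const p
    have h := ((((h0.sin.pow 2).const_mul (-2)).div_const (l ^ 2)).exp).const_mul (σ ^ 2)
    refine h.congr_deriv ?_
    simp only [Pi.pow_apply]
    push_cast
    field_simp
    ring
  refine Convex.norm_image_sub_le_of_norm_hasDerivWithin_le (s := Set.univ)
    (fun r _ => (hd r).hasDerivWithinAt) (fun r _ => ?_) convex_univ
    (Set.mem_univ r₂) (Set.mem_univ r₁)
  have hpi := Real.pi_pos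
  rw [Real.norm_eq_abs, abs_mul, abs_neg, abs_mul, abs_mul, Real.abs_exp,
    abs_of_pos (by positivity : 0 < 4 * Real.pi * σ ^ 2 / (p * l ^ 2))]
  calc _ ≤ 4 * Real.pi * σ ^ 2 / (p * l ^ 2) * (1 * (l / 2 * Real.exp (-1 / 2))) := by
        refine mul_le_mul_of_nonneg_left ?_ (by positivity)
        exact mul_le_mul (Real.abs_cos_le_one _) (key_bound _ l hl) (by positivity) zero_le_one
    _ = _ := by field_simp; ring
end

section
/- Let σ > 0, p > 0 and l ≥ 2, and define g : ℝ → ℝ by g(r) = σ² exp(−2 sin²(π r / p) / l²). Then g is Lipschitz continuous with constant (4π σ² / (p l²)) · exp(−2 / l²), i.e., for all r₁, r₂ ∈ ℝ, |g(r₁) − g(r₂)| ≤ (4π σ² / (p l²)) exp(−2/l²) · |r₁ − r₂|. -/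
/-- Corollary: Lipschitz continuity of the periodic kernel in the case l ≥ 2 (σ_l² ≥ 4). -/
theorem periodic_kernel_lipschitz_large_l (σ p l : ℝ) (hσ : 0 < σ) (hp : 0 < p) (hl : 2 ≤ l)
    (g : ℝ → ℝ)
    (hg : ∀ r, g r = σ ^ 2 * Real.exp (-2 * Real.sin (Real.pi * r / p) ^ 2 / l ^ 2)) :
    ∀ r₁ r₂ : ℝ,
      |g r₁ - g r₂| ≤ 4 * Real.pi * σ ^ 2 / (p * l ^ 2) * Real.exp (-2 / l ^ 2) * |r₁ - r₂| := by
  intro r₁ r₂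
  have hl0 : 0 < l := by linarith
  have hpi := Real.pi_pos
  have hd : ∀ x : ℝ, HasDerivAt g (-(4 * Real.pi * σ ^ 2 / (p * l ^ 2)) *
      (Real.sin (Real.pi * x / p) * Real.cos (Real.pi * x / p) *
        Real.exp (-2 * Real.sin (Real.pi * x / p) ^ 2 / l ^ 2))) x := by
    intro x
    have h1 : HasDerivAt (fun r : ℝ => Real.pi * r / p) (Real.pi * 1 / p) x :=
      ((hasDerivAt_id x).const_mul Real.pi).div_const p
    have h2 := ((((h1.sin.pow 2).const_mul (-2)).div_const (l ^ 2)).exp).const_mul (σ ^ 2)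
    rw [funext hg]
    refine h2.congr_deriv ?_
    simp only [Pi.pow_apply]
    field_simp
    push_cast
    ring
  have key : ∀ x : ℝ, |Real.sin x * Real.cos x * Real.exp (-2 * Real.sin x ^ 2 / l ^ 2)|
      ≤ Real.exp (-2 / l ^ 2) := by
    intro x
    have hsc := Real.sin_sq_add_cos_sq x
    have e : Real.exp (-2 / l ^ 2) =
        Real.exp (-2 * Real.cos x ^ 2 / l ^ 2) * Real.exp (-2 * Real.sin x ^ 2 / l ^ 2) := by
      rw [← Real.exp_add]
      congr 1
      field_simp
      linarith
    rw [e, abs_mul, abs_of_pos (Real.exp_pos _)]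
    refine mul_le_mul_of_nonneg_right ?_ (Real.exp_pos _).le
    have h1 : |Real.sin x * Real.cos x| ≤ 1 / 2 := by
      rw [abs_le]
      constructor <;>
        nlinarith [sq_nonneg (Real.sin x + Real.cos x), sq_nonneg (Real.sin x - Real.cos x)]
    have h2 := Real.add_one_le_exp (-2 * Real.cos x ^ 2 / l ^ 2)
    have h3 : -(1 / 2 : ℝ) ≤ -2 * Real.cos x ^ 2 / l ^ 2 := by
      rw [le_div_iff₀ (by positivity)]
      nlinarith [sq_nonneg (Real.sin x)]
    linarith
  have h := Convex.norm_image_sub_le_of_norm_hasDerivWithin_le (f := g) (s := Set.univ)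
    (C := 4 * Real.pi * σ ^ 2 / (p * l ^ 2) * Real.exp (-2 / l ^ 2)) (x := r₂) (y := r₁)
    (fun x _ => (hd x).hasDerivWithinAt) (fun x _ => by
      rw [Real.norm_eq_abs, abs_mul, abs_neg, abs_of_nonneg (by positivity)]
      exact mul_le_mul_of_nonneg_left (key _) (by positivity))
    convex_univ (Set.mem_univ _) (Set.mem_univ _)
  simpa only [Real.norm_eq_abs] using h
end
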